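/- arXiv:math/0009234 — 2 statements merged into one kernel-verified Lean document; each statement's English description precedes it below -/
import Mathlib

section
/- Let R be a ring and let f : C → D be a chain map of nonnegatively graded chain complexes of finitely generated free R-modules such that H_0(f) : H_0(C) → H_0(D) is bijective and H_1(f) : H_1(C) → H_1(D) is surjective. Then there exist a nonnegatively graded chain complex C' of finitely generated free R-modules with C'_n = C_n for all n ≥ 3, a chain map ι : C → C' which is a chain homotopy equivalence and equals the identity in all degrees n ≥ 3, and a chain map f' : C' → D such that f' ∘ ι = f and f'_0 : C'_0 → D_0 is an isomorphism. -/
open CategoryTheory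

/-!
Since `C₀` and `D₀` are projective, surjectivity of `H₀(f)` provides `s : D₀ ⟶ C₀` and a homotopy
`hD : D₀ ⟶ D₁` from `s ≫ f₀` to the identity, and injectivity of `H₀(f)` provides a homotopy
`hC : C₀ ⟶ C₁` from `f₀ ≫ s` to the identity. The discrepancy `hC ≫ f₁ - f₀ ≫ hD` consists of
cycles, so surjectivity of `H₁(f)` makes it a boundary `k ≫ d`, after changing `hC` by cycles.

Now attach to `C` a cancelling copy of `D₀` in degrees `0` and `1`, and cancel `C₀` in degree `0` by
a copy of `C₀` in degree `2`: the result
`⋯ ⟶ C₃ ⟶ C₂ ⊞ C₀ ⟶ C₁ ⊞ D₀ ⟶ D₀` is homotopy equivalent to `C`, and `f` extends over it as the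
identity in degree `0`, as `hD` on the new summand in degree `1` and as `k` on that in degree `2`.
-/

open Limits

universe v u

section Preadditive

variable {V : Type u} [Category.{v} V] [Preadditive V] {C D : ChainComplex V ℕ}

/-- The chain homotopy with components `h n : C.X n ⟶ D.X (n + 1)`; it plays for homotopies the
role of `ChainComplex.ofHom` for chain maps. -/
def chainHomotopyMk {f g : C ⟶ D} (h : ∀ n, C.X n ⟶ D.X (n + 1))
    (comm_zero : f.f 0 = h 0 ≫ D.d 1 0 + g.f 0)
    (comm_succ : ∀ n, f.f (n + 1) =
      C.d (n + 1) n ≫ h n + h (n + 1) ≫ D.d (n + 2) (n + 1) + g.f (n + 1)) :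
    Homotopy f g where
  hom i j := if hij : i + 1 = j then h i ≫ eqToHom (by rw [hij]) else 0
  zero _ _ hij := dif_neg hij
  comm
    | 0 => by
      rw [Homotopy.prevD_chainComplex, Homotopy.dNext_zero_chainComplex]
      simpa using comm_zero
    | n + 1 => by
      rw [Homotopy.prevD_chainComplex, Homotopy.dNext_succ_chainComplex]
      simpa using comm_succ n

/-- A homotopy inverse of `f` in degree `0`: a map `s` back, homotopies `hC` and `hD` from the two
composites to the identities, and a homotopy `k` which compares `hC` with `hD` along `f`. -/
structure DegreeZeroInverse (f : C ⟶ D) where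
  s : D.X 0 ⟶ C.X 0
  hC : C.X 0 ⟶ C.X 1
  hD : D.X 0 ⟶ D.X 1
  k : C.X 0 ⟶ D.X 2
  hC_comp_d : hC ≫ C.d 1 0 = 𝟙 _ - f.f 0 ≫ s
  hD_comp_d : hD ≫ D.d 1 0 = 𝟙 _ - s ≫ f.f 0
  k_comp_d : k ≫ D.d 2 1 = hC ≫ f.f 1 - f.f 0 ≫ hD

namespace DegreeZeroInverse

attribute [simp] hC_comp_d hD_comp_d k_comp_d

variable {f : C ⟶ D} (S : DegreeZeroInverse f)

@[simp]
lemma hC_comp_d_assoc {Z : V} (g : C.X 0 ⟶ Z) :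
    S.hC ≫ C.d 1 0 ≫ g = (𝟙 _ - f.f 0 ≫ S.s) ≫ g := by
  rw [← S.hC_comp_d, Category.assoc]

variable [HasBinaryBiproducts V]

/-- The objects of the aligned complex. -/
noncomputable def alignedX (C D : ChainComplex V ℕ) : ℕ → V
  | 0 => D.X 0
  | 1 => C.X 1 ⊞ D.X 0
  | 2 => C.X 2 ⊞ C.X 0
  | n + 3 => C.X (n + 3)

/-- The differential of the aligned complex from degree `1` to degree `0`. -/
noncomputable def d₁ : C.X 1 ⊞ D.X 0 ⟶ D.X 0 :=
  biprod.desc (C.d 1 0 ≫ f.f 0) (S.hD ≫ D.d 1 0)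

/-- The differential of the aligned complex from degree `2` to degree `1`. -/
noncomputable def d₂ : C.X 2 ⊞ C.X 0 ⟶ C.X 1 ⊞ D.X 0 :=
  biprod.desc (C.d 2 1 ≫ biprod.inl) (biprod.lift S.hC (-f.f 0))

/-- The differentials of the aligned complex. -/
noncomputable def alignedD : ∀ n, alignedX C D (n + 1) ⟶ alignedX C D n
  | 0 => S.d₁
  | 1 => S.d₂
  | 2 => C.d 3 2 ≫ biprod.inl
  | n + 3 => C.d (n + 4) (n + 3)

lemma d₂_comp_d₁ : S.d₂ ≫ S.d₁ = 0 := by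
  apply biprod.hom_ext' <;> simp [d₁, d₂, biprod.lift_desc]

lemma d_inl_comp_d₂ : (C.d 3 2 ≫ biprod.inl) ≫ S.d₂ = 0 := by
  simp [d₂]

lemma alignedD_comp_alignedD : ∀ n, S.alignedD (n + 1) ≫ S.alignedD n = 0
  | 0 => S.d₂_comp_d₁
  | 1 => S.d_inl_comp_d₂
  | 2 => (C.d_comp_d_assoc 4 3 2 _).trans zero_comp
  | _ + 3 => C.d_comp_d _ _ _

/-- The complex obtained from `C` by replacing `C₀` by `D₀`, adding `D₀` in degree `1`
and `C₀` in degree `2`. -/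
noncomputable def aligned : ChainComplex V ℕ :=
  .of (alignedX C D) S.alignedD S.alignedD_comp_alignedD

lemma aligned_d (n : ℕ) : S.aligned.d (n + 1) n = S.alignedD n :=
  ChainComplex.of_d _ _ n

lemma prop_aligned_X (P : ObjectProperty V) (hP : ∀ X Y, P X → P Y → P (X ⊞ Y))
    (hC : ∀ n, P (C.X n)) (hD : P (D.X 0)) : ∀ n, P (S.aligned.X n)
  | 0 => hD
  | 1 => hP _ _ (hC 1) hD
  | 2 => hP _ _ (hC 2) (hC 0)
  | n + 3 => hC (n + 3)

/-- The inclusion of `C` in the aligned complex, which is `f₀` in degree `0`. -/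
noncomputable def ι : C ⟶ S.aligned :=
  ChainComplex.ofHom
    (fun
      | 0 => f.f 0
      | 1 => biprod.inl
      | 2 => biprod.inl
      | n + 3 => 𝟙 (C.X (n + 3)))
    (fun n => by
      rw [aligned_d]
      exact match n with
      | 0 => biprod.inl_desc _ _
      | 1 => biprod.inl_desc _ _
      | 2 => Category.id_comp _
      | _ + 3 => (Category.id_comp _).trans (Category.comp_id _).symm)

/-- The component in degree `1` of the homotopy inverse of `ι`. -/
noncomputable def ιInv₁ : C.X 1 ⊞ D.X 0 ⟶ C.X 1 :=
  biprod.desc (𝟙 _ - C.d 1 0 ≫ S.hC) (S.s ≫ S.hC)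

lemma ιInv₁_comp_d : S.ιInv₁ ≫ C.d 1 0 = S.d₁ ≫ S.s := by
  apply biprod.hom_ext' <;> simp [d₁, ιInv₁]

lemma d₂_comp_ιInv₁ : S.d₂ ≫ S.ιInv₁ = biprod.fst ≫ C.d 2 1 := by
  apply biprod.hom_ext' <;> simp [d₂, ιInv₁, biprod.lift_desc]

/-- The homotopy inverse of `ι`. -/
noncomputable def ιInv : S.aligned ⟶ C :=
  ChainComplex.ofHom
    (fun
      | 0 => S.s
      | 1 => S.ιInv₁
      | 2 => biprod.fst
      | n + 3 => 𝟙 (C.X (n + 3)))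
    (fun n => by
      rw [aligned_d]
      exact match n with
      | 0 => S.ιInv₁_comp_d
      | 1 => S.d₂_comp_ιInv₁.symm
      | 2 => (by simp :
          𝟙 _ ≫ C.d 3 2 = (C.d 3 2 ≫ biprod.inl) ≫ (biprod.fst : C.X 2 ⊞ C.X 0 ⟶ C.X 2))
      | _ + 3 => (Category.id_comp _).trans (Category.comp_id _).symm)

/-- The homotopy `hC`, concentrated in degree `0`, from the identity of `C` to `ι ≫ ιInv`. -/
noncomputable def homotopyιInv : Homotopy (𝟙 C) (S.ι ≫ S.ιInv) :=
  chainHomotopyMk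
    (fun
      | 0 => S.hC
      | _ + 1 => 0)
    (by simp : 𝟙 (C.X 0) = S.hC ≫ C.d 1 0 + f.f 0 ≫ S.s)
    (fun
      | 0 => (by simp [ιInv₁] :
          𝟙 (C.X 1) = C.d 1 0 ≫ S.hC + 0 ≫ C.d 2 1 + biprod.inl ≫ S.ιInv₁)
      | 1 => (by simp :
          𝟙 (C.X 2) = C.d 2 1 ≫ 0 + 0 ≫ C.d 3 2 +
            biprod.inl ≫ (biprod.fst : C.X 2 ⊞ C.X 0 ⟶ C.X 2))
      | n + 2 => (by simp :
          𝟙 (C.X (n + 3)) = C.d (n + 3) (n + 2) ≫ 0 + 0 ≫ C.d (n + 4) (n + 3) + 𝟙 _ ≫ 𝟙 _))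

/-- The component from degree `1` to degree `2` of the homotopy on the aligned complex. -/
noncomputable def alignedHomotopy₁ : C.X 1 ⊞ D.X 0 ⟶ C.X 2 ⊞ C.X 0 :=
  biprod.desc (C.d 1 0) (-S.s) ≫ biprod.inr

lemma inr_comp_d₁_add_s_comp_f : biprod.inr ≫ S.d₁ + S.s ≫ f.f 0 = 𝟙 (D.X 0) := by
  simp [d₁]

lemma alignedHomotopy₁_comm :
    S.d₁ ≫ biprod.inr + S.alignedHomotopy₁ ≫ S.d₂ + S.ιInv₁ ≫ biprod.inl =
      𝟙 (C.X 1 ⊞ D.X 0) := by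
  apply biprod.hom_ext' <;> apply biprod.hom_ext <;> simp [d₁, d₂, alignedHomotopy₁, ιInv₁]

lemma d₂_comp_alignedHomotopy₁ :
    S.d₂ ≫ S.alignedHomotopy₁ + biprod.fst ≫ biprod.inl = 𝟙 (C.X 2 ⊞ C.X 0) := by
  apply biprod.hom_ext' <;> apply biprod.hom_ext <;>
    simp [d₂, alignedHomotopy₁, biprod.lift_desc_assoc]

/-- The homotopy from the identity of the aligned complex to `ιInv ≫ ι`. -/
noncomputable def homotopyInvι : Homotopy (𝟙 S.aligned) (S.ιInv ≫ S.ι) :=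
  chainHomotopyMk
    (fun
      | 0 => (biprod.inr : D.X 0 ⟶ C.X 1 ⊞ D.X 0)
      | 1 => S.alignedHomotopy₁
      | _ + 2 => 0)
    (by
      rw [aligned_d]
      exact S.inr_comp_d₁_add_s_comp_f.symm)
    (fun n => by
      rw [aligned_d, aligned_d]
      exact match n with
      | 0 => S.alignedHomotopy₁_comm.symm
      | 1 => (by rw [zero_comp, add_zero, d₂_comp_alignedHomotopy₁] :
          𝟙 (C.X 2 ⊞ C.X 0) = S.d₂ ≫ S.alignedHomotopy₁ + 0 ≫ C.d 3 2 ≫ biprod.inl +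
            biprod.fst ≫ biprod.inl)
      | n + 2 => (by simp :
          𝟙 (alignedX C D (n + 3)) = S.alignedD (n + 2) ≫ 0 + 0 ≫ S.alignedD (n + 3) +
            𝟙 _ ≫ 𝟙 _))

/-- The inclusion of `C` in the aligned complex as a homotopy equivalence. -/
noncomputable def homotopyEquiv : HomotopyEquiv C S.aligned where
  hom := S.ι
  inv := S.ιInv
  homotopyHomInvId := S.homotopyιInv.symm
  homotopyInvHomId := S.homotopyInvι.symm

lemma desc_hD_comp_d : biprod.desc (f.f 1) S.hD ≫ D.d 1 0 = S.d₁ := by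
  apply biprod.hom_ext' <;> simp [d₁]

lemma desc_k_comp_d :
    biprod.desc (f.f 2) S.k ≫ D.d 2 1 = S.d₂ ≫ biprod.desc (f.f 1) S.hD := by
  apply biprod.hom_ext' <;> simp [d₂, biprod.lift_desc, sub_eq_add_neg]

/-- The extension of `f` to the aligned complex, which is the identity in degree `0`. -/
noncomputable def toTarget : S.aligned ⟶ D :=
  ChainComplex.ofHom
    (fun
      | 0 => 𝟙 (D.X 0)
      | 1 => biprod.desc (f.f 1) S.hD
      | 2 => biprod.desc (f.f 2) S.k
      | n + 3 => f.f (n + 3))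
    (fun n => by
      rw [aligned_d]
      exact match n with
      | 0 => S.desc_hD_comp_d.trans (Category.comp_id _).symm
      | 1 => S.desc_k_comp_d
      | 2 => (by simp : f.f 3 ≫ D.d 3 2 = (C.d 3 2 ≫ biprod.inl) ≫ biprod.desc (f.f 2) S.k)
      | _ + 3 => f.comm _ _)

lemma ι_comp_toTarget : S.ι ≫ S.toTarget = f := by
  ext n
  exact match n with
  | 0 => Category.comp_id _
  | 1 => biprod.inl_desc _ _
  | 2 => biprod.inl_desc _ _
  | _ + 3 => Category.id_comp _

end DegreeZeroInverse

end Preadditive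

section Abelian

variable {V : Type u} [Category.{v} V] [Abelian V]

section Homology

variable {I : Type*} {c : ComplexShape I} {K L : HomologicalComplex V c} {P : V} [Projective P]

lemma exists_cycle_add_boundary_eq_of_epi_homologyMap (f : K ⟶ L) (i j k : I)
    (hi : c.prev j = i) (hk : c.next j = k) [Epi (HomologicalComplex.homologyMap f j)]
    (y : P ⟶ L.X j) (hy : y ≫ L.d j k = 0) :
    ∃ (z : P ⟶ K.X j) (w : P ⟶ L.X i), z ≫ K.d j k = 0 ∧ z ≫ f.f j + w ≫ L.d i j = y := by
  obtain ⟨A, π, _, z, hz, w, hzw⟩ :=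
    (HomologicalComplex.epi_homologyMap_iff_up_to_refinements f i j k hi hk).1 ‹_› y hy
  obtain ⟨σ, hσ⟩ := Projective.factors (𝟙 P) π
  exact ⟨σ ≫ z, σ ≫ w, by simp [hz], by simpa [reassoc_of% hσ] using (σ ≫= hzw).symm⟩

lemma exists_boundary_eq_of_mono_homologyMap (f : K ⟶ L) (i j k : I)
    (hi : c.prev j = i) (hk : c.next j = k) [Mono (HomologicalComplex.homologyMap f j)]
    (x : P ⟶ K.X j) (hx : x ≫ K.d j k = 0) (w : P ⟶ L.X i) (hw : x ≫ f.f j = w ≫ L.d i j) :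
    ∃ a : P ⟶ K.X i, a ≫ K.d i j = x := by
  obtain ⟨A, π, _, a, ha⟩ :=
    (HomologicalComplex.mono_homologyMap_iff_up_to_refinements f i j k hi hk).1 ‹_› x hx w hw
  obtain ⟨σ, hσ⟩ := Projective.factors (𝟙 P) π
  exact ⟨σ ≫ a, by rw [Category.assoc, ← ha, reassoc_of% hσ]⟩

end Homology

lemma nonempty_degreeZeroInverse {C D : ChainComplex V ℕ} (f : C ⟶ D) [Projective (C.X 0)]
    [Projective (D.X 0)] [IsIso (HomologicalComplex.homologyMap f 0)]
    [Epi (HomologicalComplex.homologyMap f 1)] : Nonempty (DegreeZeroInverse f) := by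
  obtain ⟨s, hD, -, hs⟩ := exists_cycle_add_boundary_eq_of_epi_homologyMap f 1 0 0
    (by simp) (by simp) (𝟙 (D.X 0)) (by simp)
  have hD_comp_d : hD ≫ D.d 1 0 = 𝟙 _ - s ≫ f.f 0 := eq_sub_of_add_eq' hs
  obtain ⟨a, ha⟩ := exists_boundary_eq_of_mono_homologyMap f 1 0 0
    (by simp) (by simp) (𝟙 (C.X 0) - f.f 0 ≫ s) (by simp) (f.f 0 ≫ hD) (by simp [hD_comp_d])
  have discrepancy_comp_d : (a ≫ f.f 1 - f.f 0 ≫ hD) ≫ D.d 1 0 = 0 := by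
    simp [hD_comp_d, reassoc_of% ha]
  obtain ⟨z, k, hz, hk⟩ := exists_cycle_add_boundary_eq_of_epi_homologyMap f 2 1 0
    (by simp) (by simp) (a ≫ f.f 1 - f.f 0 ≫ hD) discrepancy_comp_d
  exact ⟨{
    s, hD, k
    hC := a - z
    hC_comp_d := by simp [ha, hz]
    hD_comp_d
    k_comp_d := by rw [eq_sub_of_add_eq' hk, Preadditive.sub_comp, sub_right_comm] }⟩

theorem statement4_general (P : ObjectProperty V) (hP : ∀ X Y, P X → P Y → P (X ⊞ Y))
    (C D : ChainComplex V ℕ) (f : C ⟶ D) [Projective (C.X 0)] [Projective (D.X 0)]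
    (hC : ∀ n, P (C.X n)) (hD : P (D.X 0)) [IsIso (HomologicalComplex.homologyMap f 0)]
    [Epi (HomologicalComplex.homologyMap f 1)] :
    ∃ (C' : ChainComplex V ℕ) (_ : ∀ n, P (C'.X n)) (hX : ∀ n, 3 ≤ n → C'.X n = C.X n)
      (e : HomotopyEquiv C C') (f' : C' ⟶ D),
      (∀ n (hn : 3 ≤ n), e.hom.f n = eqToHom (hX n hn).symm) ∧
      e.hom ≫ f' = f ∧ IsIso (f'.f 0) := by
  obtain ⟨S⟩ := nonempty_degreeZeroInverse f
  exact ⟨S.aligned, S.prop_aligned_X P hP hC hD, fun | _ + 3, _ => rfl, S.homotopyEquiv,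
    S.toTarget, fun | _ + 3, _ => rfl, S.ι_comp_toTarget, inferInstanceAs (IsIso (𝟙 (D.X 0)))⟩

end Abelian

/-- The finitely generated free modules. -/
def finiteFree (R : Type*) [Ring R] : ObjectProperty (ModuleCat R) :=
  fun M => Module.Free R M ∧ Module.Finite R M

lemma finiteFree_biprod {R : Type*} [Ring R] (M N : ModuleCat R) :
    finiteFree R M → finiteFree R N → finiteFree R (M ⊞ N) := by
  rintro ⟨_, _⟩ ⟨_, _⟩
  have e := (ModuleCat.biprodIsoProd M N).symm.toLinearEquiv
  exact ⟨.of_equiv e, .equiv e⟩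

/-- Semi-algebraic 0-skeleton alignment: if `H₀(f)` is bijective and `H₁(f)` is
surjective, `f : C → D` factors (on the nose) through a chain homotopy equivalence
`ι : C → C'` which is the identity in degrees `≥ 3`, via a chain map `f' : C' → D`
which is an isomorphism in degree 0. -/
theorem statement4 {R : Type*} [Ring R]
    (C D : ChainComplex (ModuleCat R) ℕ) (f : C ⟶ D)
    (hCfree : ∀ n, Module.Free R (C.X n)) (hCfin : ∀ n, Module.Finite R (C.X n))
    (hDfree : ∀ n, Module.Free R (D.X n)) (hDfin : ∀ n, Module.Finite R (D.X n))
    (h0 : Function.Bijective (HomologicalComplex.homologyMap f 0))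
    (h1 : Function.Surjective (HomologicalComplex.homologyMap f 1)) :
    ∃ (C' : ChainComplex (ModuleCat R) ℕ)
      (_ : ∀ n, Module.Free R (C'.X n)) (_ : ∀ n, Module.Finite R (C'.X n))
      (hX : ∀ n, 3 ≤ n → C'.X n = C.X n)
      (e : HomotopyEquiv C C') (f' : C' ⟶ D),
      (∀ n (hn : 3 ≤ n), e.hom.f n = eqToHom (hX n hn).symm) ∧
      e.hom ≫ f' = f ∧ IsIso (f'.f 0) := by
  have : IsIso (HomologicalComplex.homologyMap f 0) :=
    (ConcreteCategory.isIso_iff_bijective _).2 h0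
  have : Epi (HomologicalComplex.homologyMap f 1) := (ModuleCat.epi_iff_surjective _).2 h1
  obtain ⟨C', hC', h⟩ := statement4_general (finiteFree R) finiteFree_biprod C D f
    (fun n => ⟨hCfree n, hCfin n⟩) ⟨hDfree 0, hDfin 0⟩
  exact ⟨C', fun n => (hC' n).1, fun n => (hC' n).2, h⟩
end

section
/- Let R be a ring and let f : C → D be a chain map of nonnegatively graded chain complexes of finitely generated free R-modules such that H_0(f) : H_0(C) → H_0(D) is bijective and H_1(f) : H_1(C) → H_1(D) is surjective. Then there exist nonnegatively graded chain complexes C', D' of finitely generated free R-modules, chain homotopy equivalences a : C → C' and b : D → D' which are isomorphisms in every degree n ≥ 3, and a chain map f' : C' → D' whose components f'_0 and f'_1 in degrees 0 and 1 are isomorphisms, such that f' ∘ a is chain homotopic to b ∘ f. -/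
open CategoryTheory

/-! Contractible two-term complexes can be added to `C` and `D` without changing their homotopy
type. If `f` has a right inverse `g` up to boundaries in degree `n`, say `g f + h d = 1` (composing
from left to right), add `Dₙ` to `C` and `Cₙ` to `D` in degrees `n + 1` and `n`, and perturb `f ⊕ 0`
by a null-homotopic map so that its component in degree `n` becomes the invertible matrix with rows
`(f, 1)` and `(g f - 1, g)`; this is possible because the entry `g f - 1 = -h d` factors through
the differential. The homological hypotheses provide such `g` and `h` one degree at a time, each
step using that `f` is already an isomorphism in all lower degrees. -/

namespace SkeletonAlignment

open Limits HomologicalComplex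

section Preadditive

variable {V : Type*} [Category* V] [Preadditive V]

/-- The matrix with rows `(f, 1)` and `(g f - 1, g)` as an isomorphism, for arbitrary morphisms
`f` and `g` in opposite directions. It embeds `f` in an isomorphism, as in Whitehead's lemma. -/
@[simps]
noncomputable def whiteheadIso [HasBinaryBiproducts V] {X Y : V} (f : X ⟶ Y) (g : Y ⟶ X) :
    X ⊞ Y ≅ Y ⊞ X where
  hom := biprod.desc (biprod.lift f (𝟙 X)) (biprod.lift (g ≫ f - 𝟙 Y) g)
  inv := biprod.desc (biprod.lift g (-𝟙 Y)) (biprod.lift (𝟙 X - f ≫ g) f)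
  hom_inv_id := by ext <;> simp
  inv_hom_id := by ext <;> simp

variable {ι : Type*} {c : ComplexShape ι} {i j : ι}

section NullHomotopicMapSingle

variable {K L : HomologicalComplex V c}

open scoped Classical in
/-- The family of morphisms `K.X a ⟶ L.X b` whose only nonzero member is `φ`, viewed as the
components of a homotopy. -/
noncomputable def singleComponent (φ : K.X j ⟶ L.X i) (a b : ι) : K.X a ⟶ L.X b :=
  Pi.single (M := fun a => ∀ b, K.X a ⟶ L.X b) j (Pi.single i φ) a b

@[simp]
lemma singleComponent_self (φ : K.X j ⟶ L.X i) : singleComponent φ j i = φ := by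
  simp [singleComponent]

lemma singleComponent_of_ne_left (φ : K.X j ⟶ L.X i) {a : ι} (ha : a ≠ j) (b : ι) :
    singleComponent φ a b = 0 := by
  simp [singleComponent, ha]

lemma singleComponent_of_ne_right (φ : K.X j ⟶ L.X i) (a : ι) {b : ι} (hb : b ≠ i) :
    singleComponent φ a b = 0 := by
  by_cases ha : a = j
  · subst ha
    simp [singleComponent, hb]
  · exact singleComponent_of_ne_left φ ha b

/-- The null-homotopic map `d h + h d` for the homotopy `h` whose only nonzero component
is `φ`. -/
noncomputable def nullHomotopicMapSingle (φ : K.X j ⟶ L.X i) : K ⟶ L :=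
  Homotopy.nullHomotopicMap (singleComponent φ)

/-- The tautological null homotopy of `nullHomotopicMapSingle`. -/
noncomputable def nullHomotopySingle (hij : c.Rel i j) (φ : K.X j ⟶ L.X i) :
    Homotopy (nullHomotopicMapSingle φ) 0 :=
  Homotopy.nullHomotopy _ fun a b hab => by
    by_cases ha : a = j
    · subst ha
      exact singleComponent_of_ne_right φ a fun hb => hab (hb ▸ hij)
    · exact singleComponent_of_ne_left φ ha b

lemma nullHomotopicMapSingle_f_left (hij : c.Rel i j) (hne : i ≠ j) (φ : K.X j ⟶ L.X i) :
    (nullHomotopicMapSingle φ).f i = K.d i j ≫ φ := by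
  change dNext i _ + prevD i _ = _
  rw [dNext_eq _ hij, singleComponent_self, prevD, AddMonoidHom.mk'_apply,
    singleComponent_of_ne_left φ hne, zero_comp, add_zero]

lemma nullHomotopicMapSingle_f_right (hij : c.Rel i j) (hne : i ≠ j) (φ : K.X j ⟶ L.X i) :
    (nullHomotopicMapSingle φ).f j = φ ≫ L.d i j := by
  change dNext j _ + prevD j _ = _
  rw [prevD_eq _ hij, singleComponent_self, dNext, AddMonoidHom.mk'_apply,
    singleComponent_of_ne_right φ _ hne.symm, comp_zero, zero_add]

lemma nullHomotopicMapSingle_f_of_ne (φ : K.X j ⟶ L.X i) {m : ι} (hi : m ≠ i) (hj : m ≠ j) :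
    (nullHomotopicMapSingle φ).f m = 0 := by
  change dNext m _ + prevD m _ = _
  simp [dNext, prevD, singleComponent_of_ne_left φ hj, singleComponent_of_ne_right φ _ hi]

end NullHomotopicMapSingle

section HomotopyReplacement

variable {K L : HomologicalComplex V c}

/-- A chain map `map` which agrees with `f` up to homotopy equivalences of the sources and of the
targets, through a square that commutes up to homotopy. The equivalences are data because the
degrees in which they are isomorphisms matter. -/
structure HomotopyReplacement (f : K ⟶ L) where
  {source : HomologicalComplex V c}
  {target : HomologicalComplex V c}
  sourceEquiv : HomotopyEquiv K source
  targetEquiv : HomotopyEquiv L target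
  map : source ⟶ target
  homotopy : Homotopy (sourceEquiv.hom ≫ map) (f ≫ targetEquiv.hom)

namespace HomotopyReplacement

variable {f : K ⟶ L}

/-- The composite of a replacement with a replacement of its outcome. -/
noncomputable def trans (r : HomotopyReplacement f) (s : HomotopyReplacement r.map) :
    HomotopyReplacement f where
  sourceEquiv := r.sourceEquiv.trans s.sourceEquiv
  targetEquiv := r.targetEquiv.trans s.targetEquiv
  map := s.map
  homotopy := by
    simpa using (s.homotopy.compLeft r.sourceEquiv.hom).trans
      ((Homotopy.ofEq (Category.assoc _ _ _).symm).trans (r.homotopy.compRight s.targetEquiv.hom))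

lemma homologyMap_map (r : HomotopyReplacement f) (m : ι) [K.HasHomology m] [L.HasHomology m]
    [r.source.HasHomology m] [r.target.HasHomology m] :
    homologyMap r.map m =
      (r.sourceEquiv.toHomologyIso m).inv ≫ homologyMap f m ≫
        (r.targetEquiv.toHomologyIso m).hom := by
  rw [Iso.eq_inv_comp]
  simpa [homologyMap_comp, HomotopyEquiv.toHomologyIso] using r.homotopy.homologyMap_eq m

end HomotopyReplacement

end HomotopyReplacement

section Biprod

variable [HasBinaryBiproducts V]

/-- Adding a contractible summand does not change the homotopy type. -/
noncomputable def homotopyEquivBiprod (K : HomologicalComplex V c) {L : HomologicalComplex V c}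
    (h : Homotopy (𝟙 L) 0) : HomotopyEquiv K (K ⊞ L) where
  hom := biprod.inl
  inv := biprod.fst
  homotopyHomInvId := Homotopy.ofEq biprod.inl_fst
  homotopyInvHomId := by
    simpa using ((Homotopy.refl (biprod.fst ≫ biprod.inl)).add
      ((h.compRight biprod.inr).compLeft biprod.snd)).symm

lemma isIso_biprod_inl_f (K : HomologicalComplex V c) {L : HomologicalComplex V c} {m : ι}
    (h : IsZero (L.X m)) : IsIso ((biprod.inl : K ⟶ K ⊞ L).f m) := by
  refine ⟨(biprod.fst : K ⊞ L ⟶ K).f m, by simp, ?_⟩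
  rw [← biprod_total_f, h.eq_of_tgt ((biprod.snd : K ⊞ L ⟶ L).f m) 0, zero_comp, add_zero]

end Biprod

variable [HasZeroObject V]

/-- The contractible complex `X = X` concentrated in degrees `i` and `j`. -/
noncomputable abbrev disk (hij : c.Rel i j) (X : V) : HomologicalComplex V c :=
  double (𝟙 X) hij

/-- The contraction of a disk. -/
noncomputable def diskHomotopyIdZero (hij : c.Rel i j) (hne : i ≠ j) (X : V) :
    Homotopy (𝟙 (disk hij X)) 0 :=
  (Homotopy.ofEq (by
    ext
    · simp [nullHomotopicMapSingle_f_left hij hne, double_d _ _ hne]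
    · simp [nullHomotopicMapSingle_f_right hij hne, double_d _ _ hne])).trans
  (nullHomotopySingle hij
    ((doubleXIso₁ (𝟙 X) hij hne).hom ≫ (doubleXIso₀ (𝟙 X) hij).inv))

lemma prop_disk_X (P : ObjectProperty V) [P.ContainsZero] [P.IsClosedUnderIsomorphisms]
    (hij : c.Rel i j) (hne : i ≠ j) {X : V} (hX : P X) (m : ι) : P ((disk hij X).X m) := by
  by_cases hi : m = i
  · subst hi
    exact P.prop_of_iso (doubleXIso₀ _ hij).symm hX
  by_cases hj : m = j
  · subst hj
    exact P.prop_of_iso (doubleXIso₁ _ hij hne).symm hX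
  exact P.prop_of_isZero (isZero_double_X _ hij m hi hj)

variable [HasBinaryBiproducts V]

lemma prop_biprod_X (P : ObjectProperty V) [P.IsClosedUnderIsomorphisms]
    [P.IsClosedUnderExtensions] {K L : HomologicalComplex V c} {m : ι}
    (hK : P (K.X m)) (hL : P (L.X m)) : P ((K ⊞ L).X m) :=
  P.prop_of_iso (biprodXIso K L m).symm (P.prop_biprod hK hL)

/-- The lower degree of the sum of a complex and a disk. -/
noncomputable def biprodDiskXIso (K : HomologicalComplex V c) (hij : c.Rel i j) (hne : i ≠ j)
    (X : V) : (K ⊞ disk hij X).X j ≅ K.X j ⊞ X :=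
  biprodXIso _ _ j ≪≫ biprod.mapIso (Iso.refl _) (doubleXIso₁ _ hij hne)

section Stabilize

variable {K L : HomologicalComplex V c} (f : K ⟶ L) (hij : c.Rel i j) (hne : i ≠ j)
  (g : L.X j ⟶ K.X j) (h : L.X j ⟶ L.X i)

/-- The homotopy component by which `f ⊕ 0` is perturbed in `stabilize`. In terms of the summands it
is `(x, y) ↦ (-h y, x + g y)`. -/
noncomputable def stabilizeComponent :
    (K ⊞ disk hij (L.X j)).X j ⟶ (L ⊞ disk hij (K.X j)).X i :=
  (biprod.fst : K ⊞ disk hij (L.X j) ⟶ K).f j ≫ (doubleXIso₀ _ hij).inv ≫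
      (biprod.inr : _ ⟶ L ⊞ disk hij (K.X j)).f i +
    (biprod.snd : K ⊞ disk hij (L.X j) ⟶ _).f j ≫ (doubleXIso₁ _ hij hne).hom ≫
      (g ≫ (doubleXIso₀ _ hij).inv ≫ (biprod.inr : _ ⟶ L ⊞ disk hij (K.X j)).f i -
        h ≫ (biprod.inl : L ⟶ L ⊞ disk hij (K.X j)).f i)

/-- The map `f ⊕ 0` between the sums of `K` and `L` with disks, perturbed by a null-homotopic map
so as to have a Whitehead matrix as its component in degree `j`. -/
noncomputable def stabilize : K ⊞ disk hij (L.X j) ⟶ L ⊞ disk hij (K.X j) :=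
  biprod.fst ≫ f ≫ biprod.inl + nullHomotopicMapSingle (stabilizeComponent hij hne g h)

/-- Stabilization does not change the homotopy class of a chain map. -/
noncomputable def stabilizeHomotopy :
    Homotopy (biprod.inl ≫ stabilize f hij hne g h) (f ≫ biprod.inl) := by
  simpa [stabilize] using (Homotopy.refl (f ≫ biprod.inl)).add
    ((nullHomotopySingle hij (stabilizeComponent hij hne g h)).compLeft biprod.inl)

/-- The replacement of a chain map by its stabilization. -/
noncomputable def stabilizeReplacement : HomotopyReplacement f where
  sourceEquiv := homotopyEquivBiprod K (diskHomotopyIdZero hij hne (L.X j))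
  targetEquiv := homotopyEquivBiprod L (diskHomotopyIdZero hij hne (K.X j))
  map := stabilize f hij hne g h
  homotopy := stabilizeHomotopy f hij hne g h

variable {g h}

lemma biprodDiskXIso_inv_comp_stabilize_f_comp_hom (w : g ≫ f.f j + h ≫ L.d i j = 𝟙 (L.X j)) :
    (biprodDiskXIso K hij hne (L.X j)).inv ≫ (stabilize f hij hne g h).f j ≫
      (biprodDiskXIso L hij hne (K.X j)).hom = (whiteheadIso (f.f j) g).hom := by
  have hd : h ≫ L.d i j = 𝟙 _ - g ≫ f.f j := by rw [← w, add_sub_cancel_left]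
  ext <;> simp [biprodDiskXIso, stabilize, nullHomotopicMapSingle_f_right hij hne,
    stabilizeComponent, double_d _ _ hne, hd]

lemma isIso_stabilize_f (w : g ≫ f.f j + h ≫ L.d i j = 𝟙 (L.X j)) :
    IsIso ((stabilize f hij hne g h).f j) := by
  have : IsIso ((biprodDiskXIso K hij hne (L.X j)).inv ≫ (stabilize f hij hne g h).f j ≫
      (biprodDiskXIso L hij hne (K.X j)).hom) := by
    rw [biprodDiskXIso_inv_comp_stabilize_f_comp_hom f hij hne w]
    infer_instance
  have := IsIso.of_isIso_comp_left (biprodDiskXIso K hij hne (L.X j)).inv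
    ((stabilize f hij hne g h).f j ≫ (biprodDiskXIso L hij hne (K.X j)).hom)
  exact IsIso.of_isIso_comp_right _ (biprodDiskXIso L hij hne (K.X j)).hom

variable (g h)

lemma isIso_stabilize_f_of_ne {m : ι} (hi : m ≠ i) (hj : m ≠ j) [IsIso (f.f m)] :
    IsIso ((stabilize f hij hne g h).f m) := by
  have := isIso_biprod_inl_f K (isZero_double_X (𝟙 (L.X j)) hij m hi hj)
  have := isIso_biprod_inl_f L (isZero_double_X (𝟙 (K.X j)) hij m hi hj)
  have fac : (biprod.inl : K ⟶ K ⊞ disk hij (L.X j)).f m ≫ (stabilize f hij hne g h).f m =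
      f.f m ≫ (biprod.inl : L ⟶ L ⊞ disk hij (K.X j)).f m := by
    simp [stabilize, nullHomotopicMapSingle_f_of_ne _ hi hj]
  exact IsIso.of_isIso_fac_left fac

end Stabilize

end Preadditive

section Abelian

variable {A : Type*} [Category* A] [Abelian A] {ι : Type*} {c : ComplexShape ι}
  {K L : HomologicalComplex A c} (f : K ⟶ L) {P : A} [Projective P] {i j k : ι}

lemma exists_comp_f_add_comp_d_eq_of_epi_homologyMap (hi : c.prev j = i) (hk : c.next j = k)
    [Epi (homologyMap f j)] (z : P ⟶ L.X j) (hz : z ≫ L.d j k = 0) :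
    ∃ (g : P ⟶ K.X j) (h : P ⟶ L.X i), g ≫ f.f j + h ≫ L.d i j = z := by
  obtain ⟨Q, π, _, g, _, h, w⟩ :=
    (epi_homologyMap_iff_up_to_refinements f i j k hi hk).1 inferInstance z hz
  let s := Projective.factorThru (𝟙 P) π
  refine ⟨s ≫ g, s ≫ h, ?_⟩
  rw [Category.assoc, Category.assoc, ← Preadditive.comp_add, ← w,
    Projective.factorThru_comp_assoc, Category.id_comp]

lemma exists_comp_d_eq_of_mono_homologyMap (hi : c.prev j = i) (hk : c.next j = k)
    [Mono (homologyMap f j)] (z : P ⟶ K.X j) (hz : z ≫ K.d j k = 0)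
    (y : P ⟶ L.X i) (hy : z ≫ f.f j = y ≫ L.d i j) :
    ∃ t : P ⟶ K.X i, t ≫ K.d i j = z := by
  obtain ⟨Q, π, _, t, w⟩ :=
    (mono_homologyMap_iff_up_to_refinements f i j k hi hk).1 inferInstance z hz y hy
  refine ⟨Projective.factorThru (𝟙 P) π ≫ t, ?_⟩
  rw [Category.assoc, ← w, Projective.factorThru_comp_assoc, Category.id_comp]

lemma exists_comp_f_comp_d_eq_d (hi : c.prev j = i) (hk : c.next j = k) [IsIso (f.f j)]
    [Mono (f.f k)] [Mono (homologyMap f j)] [Projective (L.X i)] :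
    ∃ t : L.X i ⟶ K.X i, t ≫ f.f i ≫ L.d i j = L.d i j := by
  have hcycle : (L.d i j ≫ inv (f.f j)) ≫ K.d j k = 0 := by
    rw [← cancel_mono (f.f k), Category.assoc, Category.assoc, ← f.comm, IsIso.inv_hom_id_assoc,
      L.d_comp_d, zero_comp]
  obtain ⟨t, ht⟩ := exists_comp_d_eq_of_mono_homologyMap f hi hk _ hcycle (𝟙 _) (by simp)
  exact ⟨t, by rw [f.comm, reassoc_of% ht, IsIso.inv_hom_id, Category.comp_id]⟩

lemma exists_comp_f_add_comp_d_eq_id {C D : ChainComplex A ℕ} (f : C ⟶ D) (n : ℕ)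
    [Projective (D.X n)] (hf : ∀ m < n, IsIso (f.f m)) (hmono : ∀ m < n, Mono (homologyMap f m))
    [Epi (homologyMap f n)] :
    ∃ (g : D.X n ⟶ C.X n) (h : D.X n ⟶ D.X (n + 1)), g ≫ f.f n + h ≫ D.d (n + 1) n = 𝟙 _ := by
  obtain ⟨t, ht⟩ : ∃ t : D.X n ⟶ C.X n, t ≫ f.f n ≫ D.d n ((ComplexShape.down ℕ).next n) =
      D.d n ((ComplexShape.down ℕ).next n) := by
    cases n with
    | zero => exact ⟨0, by simp⟩
    | succ m =>
      have := hf m m.lt_succ_self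
      have := hf ((ComplexShape.down ℕ).next m) (by cases m <;> simp)
      have := hmono m m.lt_succ_self
      rw [ChainComplex.next_nat_succ]
      exact exists_comp_f_comp_d_eq_d f (by simp) rfl
  -- `𝟙 - t ≫ f.f n` lands in the cycles, so surjectivity on homology applies to it.
  obtain ⟨g, h, w⟩ := exists_comp_f_add_comp_d_eq_of_epi_homologyMap f (i := n + 1) (by simp) rfl
    (𝟙 _ - t ≫ f.f n) (by rw [Preadditive.sub_comp, Category.assoc, ht, Category.id_comp, sub_self])
  exact ⟨t + g, h, by rw [Preadditive.add_comp, add_assoc, w, add_sub_cancel]⟩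

variable (P : ObjectProperty A) [P.ContainsZero] [P.IsClosedUnderIsomorphisms]
  [P.IsClosedUnderExtensions] {C D : ChainComplex A ℕ} (f : C ⟶ D) (n : ℕ)

lemma exists_homotopyReplacement_of_isIso_f_of_lt (hP : P ≤ isProjective A)
    (hC : ∀ m, P (C.X m)) (hD : ∀ m, P (D.X m)) (hf : ∀ m < n, IsIso (f.f m))
    (hmono : ∀ m < n, Mono (homologyMap f m)) [Epi (homologyMap f n)] :
    ∃ r : HomotopyReplacement f, (∀ m, P (r.source.X m)) ∧ (∀ m, P (r.target.X m)) ∧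
      (∀ m, n + 2 ≤ m → IsIso (r.sourceEquiv.hom.f m)) ∧
      (∀ m, n + 2 ≤ m → IsIso (r.targetEquiv.hom.f m)) ∧
      ∀ m ≤ n, IsIso (r.map.f m) := by
  have : Projective (D.X n) := hP _ (hD n)
  obtain ⟨g, h, w⟩ := exists_comp_f_add_comp_d_eq_id f n hf hmono
  have hij : (ComplexShape.down ℕ).Rel (n + 1) n := rfl
  have hne : n + 1 ≠ n := n.succ_ne_self
  refine ⟨stabilizeReplacement f hij hne g h,
    fun m => prop_biprod_X P (hC m) (prop_disk_X P hij hne (hD n) m),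
    fun m => prop_biprod_X P (hD m) (prop_disk_X P hij hne (hC n) m),
    fun m hm => isIso_biprod_inl_f C (isZero_double_X _ hij m (by lia) (by lia)),
    fun m hm => isIso_biprod_inl_f D (isZero_double_X _ hij m (by lia) (by lia)),
    fun m hm => ?_⟩
  obtain rfl | hlt := hm.eq_or_lt
  · exact isIso_stabilize_f f hij hne w
  · have := hf m hlt
    exact isIso_stabilize_f_of_ne f hij hne g h (by lia) (by lia)

end Abelian

section Module

variable (R : Type*) [Ring R]

/-- The property of being a finitely generated free module. -/
def finiteFree : ObjectProperty (ModuleCat R) :=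
  fun M => Module.Free R M ∧ Module.Finite R M

instance : (finiteFree R).ContainsZero where
  exists_zero := ⟨.of R PUnit, ModuleCat.isZero_of_subsingleton _, inferInstance, inferInstance⟩

instance : (finiteFree R).IsClosedUnderIsomorphisms where
  of_iso e := fun ⟨_, _⟩ => ⟨.of_equiv e.toLinearEquiv, .equiv e.toLinearEquiv⟩

instance : (finiteFree R).IsClosedUnderExtensions where
  prop_X₂_of_shortExact hS := fun ⟨_, _⟩ ⟨_, _⟩ =>
    ⟨ModuleCat.free_shortExact hS,
      .of_exact ((ShortComplex.ShortExact.moduleCat_exact_iff_function_exact _).1 hS.exact)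
        hS.moduleCat_surjective_g⟩

lemma finiteFree_le_isProjective : finiteFree R ≤ isProjective (ModuleCat R) :=
  fun _ ⟨_, _⟩ => ModuleCat.projective_of_free (Module.Free.chooseBasis R _)

end Module

end SkeletonAlignment

open HomologicalComplex SkeletonAlignment in
theorem statement9_general {A : Type*} [Category* A] [Abelian A] (P : ObjectProperty A)
    [P.ContainsZero] [P.IsClosedUnderIsomorphisms] [P.IsClosedUnderExtensions]
    (hP : P ≤ isProjective A) {C D : ChainComplex A ℕ} (f : C ⟶ D)
    (hC : ∀ m, P (C.X m)) (hD : ∀ m, P (D.X m)) (n : ℕ)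
    (hmono : ∀ m < n, Mono (homologyMap f m)) (hepi : ∀ m ≤ n, Epi (homologyMap f m)) :
    ∃ r : HomotopyReplacement f, (∀ m, P (r.source.X m)) ∧ (∀ m, P (r.target.X m)) ∧
      (∀ m, n + 2 ≤ m → IsIso (r.sourceEquiv.hom.f m)) ∧
      (∀ m, n + 2 ≤ m → IsIso (r.targetEquiv.hom.f m)) ∧
      ∀ m ≤ n, IsIso (r.map.f m) := by
  induction n with
  | zero =>
    have := hepi 0 le_rfl
    exact exists_homotopyReplacement_of_isIso_f_of_lt P f 0 hP hC hD (by simp) (by simp)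
  | succ n ih =>
    obtain ⟨r, hsource, htarget, ha, hb, hr⟩ :=
      ih (fun m hm => hmono m (by lia)) (fun m hm => hepi m (by lia))
    have hmono' (m : ℕ) (hm : m < n + 1) : Mono (homologyMap r.map m) := by
      have := hmono m hm
      rw [r.homologyMap_map]
      infer_instance
    have : Epi (homologyMap r.map (n + 1)) := by
      have := hepi (n + 1) le_rfl
      rw [r.homologyMap_map]
      infer_instance
    obtain ⟨s, hsource', htarget', ha', hb', hs⟩ :=
      exists_homotopyReplacement_of_isIso_f_of_lt P r.map (n + 1) hP hsource htarget
        (fun m hm => hr m (by lia)) hmono'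
    refine ⟨r.trans s, hsource', htarget', fun m hm => ?_, fun m hm => ?_, hs⟩
    · have := ha m (by lia)
      have := ha' m hm
      exact inferInstanceAs (IsIso (r.sourceEquiv.hom.f m ≫ s.sourceEquiv.hom.f m))
    · have := hb m (by lia)
      have := hb' m hm
      exact inferInstanceAs (IsIso (r.targetEquiv.hom.f m ≫ s.targetEquiv.hom.f m))

/-- 1-skeleton alignment lemma (algebraic content): if `H₀(f)` is bijective and
`H₁(f)` is surjective, there are complexes `C'`, `D'` of f.g. free modules, chain
homotopy equivalences `a : C → C'`, `b : D → D'` which are isomorphisms in every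
degree `≥ 3`, and a chain map `f' : C' → D'` which is an isomorphism in degrees
0 and 1, such that `f' ∘ a` is chain homotopic to `b ∘ f`. -/
theorem statement9 {R : Type*} [Ring R]
    (C D : ChainComplex (ModuleCat R) ℕ) (f : C ⟶ D)
    (hCfree : ∀ n, Module.Free R (C.X n)) (hCfin : ∀ n, Module.Finite R (C.X n))
    (hDfree : ∀ n, Module.Free R (D.X n)) (hDfin : ∀ n, Module.Finite R (D.X n))
    (h0 : Function.Bijective (HomologicalComplex.homologyMap f 0))
    (h1 : Function.Surjective (HomologicalComplex.homologyMap f 1)) :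
    ∃ (C' D' : ChainComplex (ModuleCat R) ℕ)
      (_ : ∀ n, Module.Free R (C'.X n)) (_ : ∀ n, Module.Finite R (C'.X n))
      (_ : ∀ n, Module.Free R (D'.X n)) (_ : ∀ n, Module.Finite R (D'.X n))
      (a : HomotopyEquiv C C') (b : HomotopyEquiv D D') (f' : C' ⟶ D'),
      (∀ n, 3 ≤ n → IsIso (a.hom.f n)) ∧
      (∀ n, 3 ≤ n → IsIso (b.hom.f n)) ∧
      IsIso (f'.f 0) ∧ IsIso (f'.f 1) ∧
      Nonempty (Homotopy (a.hom ≫ f') (f ≫ b.hom)) := by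
  have hmono : ∀ m < 1, Mono (HomologicalComplex.homologyMap f m) := by
    simpa [ModuleCat.mono_iff_injective] using h0.1
  have hepi : ∀ m ≤ 1, Epi (HomologicalComplex.homologyMap f m) := by
    simpa [ModuleCat.epi_iff_surjective, Nat.le_one_iff_eq_zero_or_eq_one] using ⟨h0.2, h1⟩
  obtain ⟨r, hC, hD, ha, hb, hr⟩ := statement9_general _
    (SkeletonAlignment.finiteFree_le_isProjective R) f (fun m => ⟨hCfree m, hCfin m⟩)
    (fun m => ⟨hDfree m, hDfin m⟩) 1 hmono hepi
  exact ⟨r.source, r.target, fun m => (hC m).1, fun m => (hC m).2, fun m => (hD m).1,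
    fun m => (hD m).2, r.sourceEquiv, r.targetEquiv, r.map, ha, hb,
    hr 0 zero_le_one, hr 1 le_rfl, ⟨r.homotopy⟩⟩
end
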